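/- arXiv:1403.7610 — 2 statements merged into one kernel-verified Lean document; each statement's English description precedes it below -/
import Mathlib

section
/- The natural homomorphism from Aut(M) to the product ∏_{i ∈ P} Aut(M_i, <_i) × ∏_{i ∉ P} Sym(M_i) is surjective: given, for every i ≥ 1, a permutation σ_i of M_i that preserves the order <_i whenever i ∈ P, there exists an automorphism α of M whose induced action on M_i equals σ_i for every i. -/
open FirstOrder Language Structure CategoryTheory

/-- The language `L₀` with a `2n`-ary relation symbol `E_n` for each `n ≥ 1`. -/
def L₀ : FirstOrder.Language where
  Functions := fun _ => Empty
  Relations := fun k => {n : ℕ // 0 < n ∧ k = n + n}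

/-- The relation symbol `E_n`. -/
def Esymb (n : ℕ) (hn : 0 < n) : L₀.Relations (n + n) := ⟨n, hn, rfl⟩

/-- `E_n(x̄, ȳ)` in an `L₀`-structure. -/
def ERel (M : Type*) [L₀.Structure M] (n : ℕ) (hn : 0 < n) (x y : Fin n → M) : Prop :=
  Structure.RelMap (Esymb n hn) (Fin.append x y)

/-- The defining conditions for membership in `K₀`: each `E_n` holds only on pairs of
injective `n`-tuples, is invariant under permuting the entries of each tuple separately,
and induces an equivalence relation on `n`-element subsets. -/
def IsK0Struct (C : Type*) [L₀.Structure C] : Prop :=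
  ∀ (n : ℕ) (hn : 0 < n),
    (∀ x y : Fin n → C, ERel C n hn x y → Function.Injective x ∧ Function.Injective y) ∧
    (∀ (x y : Fin n → C) (σ τ : Equiv.Perm (Fin n)),
        ERel C n hn x y → ERel C n hn (x ∘ σ) (y ∘ τ)) ∧
    (∀ x : Fin n → C, Function.Injective x → ERel C n hn x x) ∧
    (∀ x y : Fin n → C, ERel C n hn x y → ERel C n hn y x) ∧
    (∀ x y z : Fin n → C, ERel C n hn x y → ERel C n hn y z → ERel C n hn x z)

/-- The class `K₀` of finite `L₀`-structures as above. -/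
def K₀ : Set (Bundled L₀.Structure) := {C | Finite C ∧ IsK0Struct C}

/-- The language `L_P`: a `2n`-ary symbol `E_n` for each `n ≥ 1` and a `2n`-ary symbol
`<_n` for each `n ∈ P`. -/
def LP (P : Set ℕ) : FirstOrder.Language where
  Functions := fun _ => Empty
  Relations := fun k => {n : ℕ // 0 < n ∧ k = n + n} ⊕ {n : ℕ // n ∈ P ∧ k = n + n}

/-- The symbol `E_n` of `L_P`. -/
def EsymbP (P : Set ℕ) (n : ℕ) (hn : 0 < n) : (LP P).Relations (n + n) :=
  Sum.inl ⟨n, hn, rfl⟩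

/-- The symbol `<_n` of `L_P`. -/
def LTsymbP (P : Set ℕ) (n : ℕ) (hn : n ∈ P) : (LP P).Relations (n + n) :=
  Sum.inr ⟨n, hn, rfl⟩

/-- `E_n(x̄, ȳ)` in an `L_P`-structure. -/
def ERelP (P : Set ℕ) (M : Type*) [i : (LP P).Structure M] (n : ℕ) (hn : 0 < n)
    (x y : Fin n → M) : Prop :=
  @Structure.RelMap (LP P) M i (n + n) (EsymbP P n hn) (Fin.append x y)

/-- `x̄ <_n ȳ` in an `L_P`-structure. -/
def LTRelP (P : Set ℕ) (M : Type*) [i : (LP P).Structure M] (n : ℕ) (hn : n ∈ P)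
    (x y : Fin n → M) : Prop :=
  @Structure.RelMap (LP P) M i (n + n) (LTsymbP P n hn) (Fin.append x y)

/-- The defining conditions for membership in `K_P`: the `{E_n}`-part satisfies the
`K₀`-conditions, and for `n ∈ P` the relation `<_n` holds only on injective tuples, is
`E_n`-invariant, and induces a strict linear order on `E_n`-classes. -/
def IsKPStruct (P : Set ℕ) (C : Type*) [(LP P).Structure C] : Prop :=
  (∀ (n : ℕ) (hn : 0 < n),
    (∀ x y : Fin n → C, ERelP P C n hn x y → Function.Injective x ∧ Function.Injective y) ∧
    (∀ (x y : Fin n → C) (σ τ : Equiv.Perm (Fin n)),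
        ERelP P C n hn x y → ERelP P C n hn (x ∘ σ) (y ∘ τ)) ∧
    (∀ x : Fin n → C, Function.Injective x → ERelP P C n hn x x) ∧
    (∀ x y : Fin n → C, ERelP P C n hn x y → ERelP P C n hn y x) ∧
    (∀ x y z : Fin n → C, ERelP P C n hn x y → ERelP P C n hn y z → ERelP P C n hn x z)) ∧
  (∀ (n : ℕ) (hn : n ∈ P) (hn0 : 0 < n),
    (∀ x y : Fin n → C, LTRelP P C n hn x y → Function.Injective x ∧ Function.Injective y) ∧
    (∀ x x' y y' : Fin n → C, ERelP P C n hn0 x x' → ERelP P C n hn0 y y' →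
        LTRelP P C n hn x y → LTRelP P C n hn x' y') ∧
    (∀ x y : Fin n → C, LTRelP P C n hn x y → ¬ ERelP P C n hn0 x y) ∧
    (∀ x y z : Fin n → C, LTRelP P C n hn x y → LTRelP P C n hn y z → LTRelP P C n hn x z) ∧
    (∀ x y : Fin n → C, Function.Injective x → Function.Injective y →
        ¬ ERelP P C n hn0 x y → LTRelP P C n hn x y ∨ LTRelP P C n hn y x))

/-- The class `K_P` of finite `L_P`-structures as above. -/
def KP (P : Set ℕ) : Set (Bundled (LP P).Structure) := {C | Finite C ∧ IsKPStruct P C}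

/-- Build an `L_P`-structure from families of binary relations on tuples. -/
@[reducible]
def mkStr (P : Set ℕ) (D : Type) (E Lt : (n : ℕ) → (Fin n → D) → (Fin n → D) → Prop) :
    (LP P).Structure D where
  funMap := fun f => f.elim
  RelMap := fun {_} r z =>
    match r with
    | Sum.inl ⟨n, h⟩ => E n (fun i => z (Fin.cast h.2.symm (Fin.castAdd n i)))
        (fun i => z (Fin.cast h.2.symm (Fin.natAdd n i)))
    | Sum.inr ⟨n, h⟩ => Lt n (fun i => z (Fin.cast h.2.symm (Fin.castAdd n i)))
        (fun i => z (Fin.cast h.2.symm (Fin.natAdd n i)))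

theorem mkStr_E (P : Set ℕ) (D : Type) (E Lt : (n : ℕ) → (Fin n → D) → (Fin n → D) → Prop)
    (n : ℕ) (hn : 0 < n) (x y : Fin n → D) :
    @ERelP P D (mkStr P D E Lt) n hn x y ↔ E n x y := by
  change E n (fun i => Fin.append x y (Fin.castAdd n i))
    (fun i => Fin.append x y (Fin.natAdd n i)) ↔ _
  simp only [Fin.append_left, Fin.append_right]

theorem mkStr_LT (P : Set ℕ) (D : Type) (E Lt : (n : ℕ) → (Fin n → D) → (Fin n → D) → Prop)
    (n : ℕ) (hn : n ∈ P) (x y : Fin n → D) :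
    @LTRelP P D (mkStr P D E Lt) n hn x y ↔ Lt n x y := by
  change Lt n (fun i => Fin.append x y (Fin.castAdd n i))
    (fun i => Fin.append x y (Fin.natAdd n i)) ↔ _
  simp only [Fin.append_left, Fin.append_right]

theorem append_split {N : Type*} (n : ℕ) (z : Fin (n + n) → N) :
    z = Fin.append (fun i => z (Fin.castAdd n i)) (fun i => z (Fin.natAdd n i)) :=
  (Fin.append_castAdd_natAdd (f := z)).symm

/-- Relations of `L_P` are preserved once the `E_n` and `<_n` are. -/
theorem relMap_iff (P : Set ℕ) {N N' : Type*} [(LP P).Structure N] [(LP P).Structure N']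
    (φ : N → N')
    (hE : ∀ n hn (x y : Fin n → N), ERelP P N' n hn (φ ∘ x) (φ ∘ y) ↔ ERelP P N n hn x y)
    (hL : ∀ n hn (x y : Fin n → N), LTRelP P N' n hn (φ ∘ x) (φ ∘ y) ↔ LTRelP P N n hn x y)
    {k : ℕ} (r : (LP P).Relations k) (z : Fin k → N) :
    Structure.RelMap r (φ ∘ z) ↔ Structure.RelMap r z := by
  rcases r with ⟨n, hn, rfl⟩ | ⟨n, hn, rfl⟩
  · have := hE n hn (fun i => z (Fin.castAdd n i)) (fun i => z (Fin.natAdd n i))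
    unfold ERelP at this
    rw [← append_split] at this
    change Structure.RelMap (EsymbP P n hn) (φ ∘ z) ↔ Structure.RelMap (EsymbP P n hn) z
    rw [← this, append_split n (φ ∘ z)]
    rfl
  · have := hL n hn (fun i => z (Fin.castAdd n i)) (fun i => z (Fin.natAdd n i))
    unfold LTRelP at this
    rw [← append_split] at this
    change Structure.RelMap (LTsymbP P n hn) (φ ∘ z) ↔ Structure.RelMap (LTsymbP P n hn) z
    rw [← this, append_split n (φ ∘ z)]
    rfl

theorem append_comp {N N' : Type*} (φ : N → N') (n : ℕ) (x y : Fin n → N) :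
    Fin.append (φ ∘ x) (φ ∘ y) = φ ∘ Fin.append x y := by
  rw [append_split n (φ ∘ Fin.append x y)]
  congr 1
  · ext i
    simp
  · ext i
    simp only [Function.comp_apply, Fin.append_right]

theorem emb_E (P : Set ℕ) {N N' : Type*} [(LP P).Structure N] [(LP P).Structure N']
    (φ : N ↪[LP P] N') (n : ℕ) (hn : 0 < n) (x y : Fin n → N) :
    ERelP P N' n hn (φ ∘ x) (φ ∘ y) ↔ ERelP P N n hn x y := by
  unfold ERelP
  rw [append_comp, φ.map_rel]

theorem emb_LT (P : Set ℕ) {N N' : Type*} [(LP P).Structure N] [(LP P).Structure N']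
    (φ : N ↪[LP P] N') (n : ℕ) (hn : n ∈ P) (x y : Fin n → N) :
    LTRelP P N' n hn (φ ∘ x) (φ ∘ y) ↔ LTRelP P N n hn x y := by
  unfold LTRelP
  rw [append_comp, φ.map_rel]

/-- Every subset is a substructure. -/
def subOf (P : Set ℕ) (M : Type) [(LP P).Structure M] (C : Set M) : (LP P).Substructure M where
  carrier := C
  fun_mem := fun f => f.elim

/-- The ambient structure satisfies the axioms. -/
theorem isKP_of_age (P : Set ℕ) (M : Type) [(LP P).Structure M]
    (hP : ∀ n ∈ P, 3 ≤ n)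
    (hage : (LP P).age M = KP P) : IsKPStruct P M := by
  have key : ∀ C : Set M, C.Finite → IsKPStruct P (subOf P M C) := by
    intro C hC
    have hf : Finite (subOf P M C) := hC
    have : (Bundled.of (c := (LP P).Structure) (subOf P M C)) ∈ (LP P).age M :=
      ⟨@Structure.FG.of_finite (LP P) (subOf P M C) _ hf, ⟨(subOf P M C).subtype⟩⟩
    rw [hage] at this
    exact this.2
  have key3 : ∀ n (x y z : Fin n → M), ∃ C : Set M, IsKPStruct P (subOf P M C) ∧
      ∃ x' y' z' : Fin n → (subOf P M C), x = (subOf P M C).subtype ∘ x' ∧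
        y = (subOf P M C).subtype ∘ y' ∧ z = (subOf P M C).subtype ∘ z' := by
    intro n x y z
    refine ⟨Set.range x ∪ Set.range y ∪ Set.range z, key _ (Set.toFinite _),
      fun i => ⟨x i, Or.inl (Or.inl ⟨i, rfl⟩)⟩, fun i => ⟨y i, Or.inl (Or.inr ⟨i, rfl⟩)⟩,
      fun i => ⟨z i, Or.inr ⟨i, rfl⟩⟩, rfl, rfl, rfl⟩
  have key4 : ∀ n (x y z w : Fin n → M), ∃ C : Set M, IsKPStruct P (subOf P M C) ∧
      ∃ x' y' z' w' : Fin n → (subOf P M C), x = (subOf P M C).subtype ∘ x' ∧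
        y = (subOf P M C).subtype ∘ y' ∧ z = (subOf P M C).subtype ∘ z' ∧
        w = (subOf P M C).subtype ∘ w' := by
    intro n x y z w
    refine ⟨Set.range x ∪ Set.range y ∪ Set.range z ∪ Set.range w, key _ (Set.toFinite _),
      fun i => ⟨x i, Or.inl (Or.inl (Or.inl ⟨i, rfl⟩))⟩,
      fun i => ⟨y i, Or.inl (Or.inl (Or.inr ⟨i, rfl⟩))⟩,
      fun i => ⟨z i, Or.inl (Or.inr ⟨i, rfl⟩)⟩, fun i => ⟨w i, Or.inr ⟨i, rfl⟩⟩,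
      rfl, rfl, rfl, rfl⟩
  have inj : ∀ (C : Set M) n (x : Fin n → (subOf P M C)),
      Function.Injective ((subOf P M C).subtype ∘ x) ↔ Function.Injective x := fun C n x =>
    (subOf P M C).subtype.injective.of_comp_iff x
  refine ⟨fun n hn => ⟨fun x y => ?_, fun x y σ τ => ?_, fun x => ?_, fun x y => ?_,
    fun x y z => ?_⟩, fun n hn hn0 => ⟨fun x y => ?_, fun x x' y y' => ?_, fun x y => ?_,
    fun x y z => ?_, fun x y => ?_⟩⟩
  · obtain ⟨C, hC, x, y, -, rfl, rfl, -⟩ := key3 n x y y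
    rw [inj, inj, emb_E]
    exact (hC.1 n hn).1 x y
  · obtain ⟨C, hC, x, y, -, rfl, rfl, -⟩ := key3 n x y y
    rw [Function.comp_assoc, Function.comp_assoc, emb_E, emb_E]
    exact (hC.1 n hn).2.1 x y σ τ
  · obtain ⟨C, hC, x, -, -, rfl, -, -⟩ := key3 n x x x
    rw [inj, emb_E]
    exact (hC.1 n hn).2.2.1 x
  · obtain ⟨C, hC, x, y, -, rfl, rfl, -⟩ := key3 n x y y
    rw [emb_E, emb_E]
    exact (hC.1 n hn).2.2.2.1 x y
  · obtain ⟨C, hC, x, y, z, rfl, rfl, rfl⟩ := key3 n x y z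
    rw [emb_E, emb_E, emb_E]
    exact (hC.1 n hn).2.2.2.2 x y z
  · obtain ⟨C, hC, x, y, -, rfl, rfl, -⟩ := key3 n x y y
    rw [inj, inj, emb_LT]
    exact (hC.2 n hn hn0).1 x y
  · obtain ⟨C, hC, x, x', y, y', rfl, rfl, rfl, rfl⟩ := key4 n x x' y y'
    rw [emb_E, emb_E, emb_LT, emb_LT]
    exact (hC.2 n hn hn0).2.1 x x' y y'
  · obtain ⟨C, hC, x, y, -, rfl, rfl, -⟩ := key3 n x y y
    rw [emb_E, emb_LT]
    exact (hC.2 n hn hn0).2.2.1 x y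
  · obtain ⟨C, hC, x, y, z, rfl, rfl, rfl⟩ := key3 n x y z
    rw [emb_LT, emb_LT, emb_LT]
    exact (hC.2 n hn hn0).2.2.2.1 x y z
  · obtain ⟨C, hC, x, y, -, rfl, rfl, -⟩ := key3 n x y y
    rw [inj, inj, emb_E, emb_LT, emb_LT]
    exact (hC.2 n hn hn0).2.2.2.2 x y

/-- `M` has injective tuples of every length. -/
theorem exists_inj_tuple (P : Set ℕ) (M : Type) [(LP P).Structure M]
    (hage : (LP P).age M = KP P) (n : ℕ) : ∃ d : Fin n → M, Function.Injective d := by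
  let _ : (LP P).Structure (Fin n) := mkStr P (Fin n)
    (fun _ x y => Function.Injective x ∧ Function.Injective y) (fun _ _ _ => False)
  have : (Bundled.of (c := (LP P).Structure) (Fin n)) ∈ KP P := by
    refine ⟨inferInstanceAs (Finite (Fin n)), ?_⟩
    change IsKPStruct P (Fin n)
    simp only [IsKPStruct, mkStr_E, mkStr_LT]
    refine ⟨fun n hn => ⟨fun x y h => h, fun x y σ τ h => ⟨h.1.comp σ.injective,
      h.2.comp τ.injective⟩, fun x h => ⟨h, h⟩, fun x y h => ⟨h.2, h.1⟩,
      fun x y z h h' => ⟨h.1, h'.2⟩⟩, fun n hn hn0 => ⟨by simp, by simp, by simp, by simp,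
      fun x y hx hy h => (h ⟨hx, hy⟩).elim⟩⟩
  rw [← hage] at this
  obtain ⟨-, ⟨f⟩⟩ := this
  exact ⟨f, f.injective⟩

/-- Pulling back along a tuple map gives a structure satisfying the axioms. -/
theorem pull_isKP (P : Set ℕ) (M : Type) [(LP P).Structure M] (hM : IsKPStruct P M)
    (D : Type) (E Lt : (n : ℕ) → (Fin n → D) → (Fin n → D) → Prop)
    (g : (n : ℕ) → (Fin n → D) → (Fin n → M))
    (hE : ∀ n (hn : 0 < n) x y, E n x y ↔ Function.Injective x ∧ Function.Injective y ∧
      ERelP P M n hn (g n x) (g n y))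
    (hLt : ∀ n (hn : n ∈ P) x y, Lt n x y ↔ Function.Injective x ∧ Function.Injective y ∧
      LTRelP P M n hn (g n x) (g n y))
    (hg : ∀ n, 0 < n → ∀ x, Function.Injective x → Function.Injective (g n x))
    (hperm : ∀ n (hn : 0 < n) x (τ : Equiv.Perm (Fin n)), Function.Injective x →
      ERelP P M n hn (g n (x ∘ τ)) (g n x)) :
    @IsKPStruct P D (mkStr P D E Lt) := by
  simp only [IsKPStruct, mkStr_E, mkStr_LT]
  refine ⟨fun n hn => ?_, fun n hn hn0 => ?_⟩
  · obtain ⟨h1, h2, h3, h4, h5⟩ := hM.1 n hn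
    simp only [hE n hn]
    refine ⟨fun x y h => ⟨h.1, h.2.1⟩, fun x y σ τ h => ⟨h.1.comp σ.injective,
      h.2.1.comp τ.injective, ?_⟩, fun x h => ⟨h, h, h3 _ (hg n hn x h)⟩,
      fun x y h => ⟨h.2.1, h.1, h4 _ _ h.2.2⟩,
      fun x y z h h' => ⟨h.1, h'.2.1, h5 _ _ _ h.2.2 h'.2.2⟩⟩
    exact h5 _ _ _ (hperm n hn x σ h.1) (h5 _ _ _ h.2.2 (h4 _ _ (hperm n hn y τ h.2.1)))
  · obtain ⟨h1, h2, h3, h4, h5⟩ := hM.2 n hn hn0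
    simp only [hE n hn0, hLt n hn]
    refine ⟨fun x y h => ⟨h.1, h.2.1⟩, fun x x' y y' h h' h'' => ⟨h.2.1, h'.2.1,
      h2 _ _ _ _ h.2.2 h'.2.2 h''.2.2⟩, fun x y h h' => h3 _ _ h.2.2 h'.2.2,
      fun x y z h h' => ⟨h.1, h'.2.1, h4 _ _ _ h.2.2 h'.2.2⟩, fun x y hx hy h => ?_⟩
    have := h5 (g n x) (g n y) (hg n hn0 x hx) (hg n hn0 y hy) (fun h' => h ⟨hx, hy, h'⟩)
    tauto

/-- Finite partial maps compatible with `σ`. -/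
def GoodFor (P : Set ℕ) (M : Type) [(LP P).Structure M]
    (σ : (i : ℕ) → (Fin i → M) → (Fin i → M)) (s : Finset (M × M)) : Prop :=
  (∀ p ∈ s, ∀ q ∈ s, p.1 = q.1 ↔ p.2 = q.2) ∧
  ∀ (n : ℕ) (hn : 0 < n) (p : Fin n → M × M), (∀ l, p l ∈ s) →
    Function.Injective (fun l => (p l).1) →
    ERelP P M n hn (fun l => (p l).2) (σ n (fun l => (p l).1))

theorem goodFor_swap (P : Set ℕ) (M : Type) [(LP P).Structure M] (hM : IsKPStruct P M)
    [DecidableEq M]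
    (σ τ : (i : ℕ) → (Fin i → M) → (Fin i → M))
    (hτwd : ∀ (i : ℕ) (hi : 0 < i), ∀ v w : Fin i → M, Function.Injective v →
        Function.Injective w → ERelP P M i hi v w → ERelP P M i hi (τ i v) (τ i w))
    (hτσ : ∀ (i : ℕ) (hi : 0 < i), ∀ v : Fin i → M, Function.Injective v →
        ERelP P M i hi (τ i (σ i v)) v)
    (s : Finset (M × M)) (hs : GoodFor P M σ s) : GoodFor P M τ (s.image Prod.swap) := by
  refine ⟨?_, ?_⟩
  · intro p hp q hq
    rw [Finset.mem_image] at hp hq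
    obtain ⟨p, hp, rfl⟩ := hp
    obtain ⟨q, hq, rfl⟩ := hq
    exact (hs.1 p hp q hq).symm
  · intro n hn p hp hinj
    have hp' : ∀ l, (p l).swap ∈ s := by
      intro l
      obtain ⟨q, hq, h⟩ := Finset.mem_image.1 (hp l)
      rw [← h]
      simpa using hq
    have hinj' : Function.Injective (fun l => ((p l).swap).1) := by
      intro l l' h
      exact hinj ((hs.1 _ (hp' l) _ (hp' l')).1 h)
    have h := hs.2 n hn (fun l => (p l).swap) hp' hinj'
    obtain ⟨h1, h2, h3, h4, h5⟩ := hM.1 n hn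
    have hi := h1 _ _ h
    exact h5 _ _ _ (h4 _ _ (hτσ n hn _ hinj')) (h4 _ _ (hτwd n hn _ _ hi.1 hi.2 h))

/-- The one point extension property. -/
theorem goodFor_forth (P : Set ℕ) (M : Type) [(LP P).Structure M] (hM : IsKPStruct P M)
    [DecidableEq M]
    (hP : ∀ n ∈ P, 3 ≤ n)
    (hUH : (LP P).IsUltrahomogeneous M) (hage : (LP P).age M = KP P)
    (σ : (i : ℕ) → (Fin i → M) → (Fin i → M))
    (hinj : ∀ (i : ℕ), 0 < i → ∀ v : Fin i → M, Function.Injective v →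
        Function.Injective (σ i v))
    (hwd : ∀ (i : ℕ) (hi : 0 < i), ∀ v w : Fin i → M, Function.Injective v →
        Function.Injective w → ERelP P M i hi v w → ERelP P M i hi (σ i v) (σ i w))
    (s : Finset (M × M)) (hs : GoodFor P M σ s) (a : M) :
    ∃ b, GoodFor P M σ (insert (a, b) s) := by
  classical
  by_cases ha : ∃ b, (a, b) ∈ s
  · obtain ⟨b, hb⟩ := ha
    refine ⟨b, ?_⟩
    rwa [Finset.insert_eq_of_mem hb]
  push Not at ha
  choose d hd using exists_inj_tuple P M hage
  -- the finite set of parameters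
  obtain ⟨C, hCfin, hCB, hCσ⟩ : ∃ C : Set M, C.Finite ∧ (∀ p ∈ s, p.2 ∈ C) ∧
      ∀ n (v : Fin n → M), Function.Injective v →
        (∀ l, v l ∈ insert a (s.image Prod.fst)) → ∀ l, σ n v l ∈ C := by
    refine ⟨(s.image Prod.snd : Set M) ∪ ⋃ k : Fin ((insert a (s.image Prod.fst)).card + 1),
      ⋃ v : Fin k → (insert a (s.image Prod.fst) : Finset M),
        Set.range (σ k (fun l => (v l : M))), Set.toFinite _, ?_, ?_⟩
    · intro p hp
      left
      exact Finset.mem_coe.2 (Finset.mem_image_of_mem _ hp)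
    · intro n v hv hl l
      right
      have hn : n < (insert a (s.image Prod.fst)).card + 1 := by
        have := Finset.card_le_card_of_injOn (s := Finset.univ) v (fun l _ => hl l) hv.injOn
        simp only [Finset.card_univ, Fintype.card_fin] at this
        omega
      refine Set.mem_iUnion.2 ⟨⟨n, hn⟩, Set.mem_iUnion.2 ⟨fun l => ⟨v l, hl l⟩, l, rfl⟩⟩
  -- partial inverse on the extension
  let Rel : Option (subOf P M C) → M → Prop := fun y m =>
    match y with
    | none => m = a
    | some c => (m, (c : M)) ∈ s
  have Rel_fun : ∀ y m m', Rel y m → Rel y m' → m = m' := by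
    intro y m m' h h'
    cases y with
    | none => exact h.trans h'.symm
    | some c => exact (hs.1 _ h _ h').2 rfl
  have Rel_inj : ∀ y y' m, Rel y m → Rel y' m → y = y' := by
    intro y y' m h h'
    cases y with
    | none =>
      cases y' with
      | none => rfl
      | some c =>
        have h : m = a := h
        subst h
        exact (ha _ h').elim
    | some c =>
      cases y' with
      | none =>
        have h' : m = a := h'
        subst h'
        exact (ha _ h).elim
      | some c' => exact congrArg some (Subtype.ext ((hs.1 _ h _ h').1 rfl))
  let e : Option (subOf P M C) → M := fun y => if h : ∃ m, Rel y m then h.choose else a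
  have he : ∀ y m, Rel y m → e y = m := by
    intro y m h
    have h' : ∃ m, Rel y m := ⟨m, h⟩
    simp only [e, dif_pos h']
    exact Rel_fun _ _ _ h'.choose_spec h
  let val : Option (subOf P M C) → M := fun y => match y with
    | none => a
    | some c => c
  let g : (n : ℕ) → (Fin n → Option (subOf P M C)) → (Fin n → M) := fun n x =>
    if ∀ l, x l ≠ none then fun l => val (x l)
    else if ∀ l, ∃ m, Rel (x l) m then σ n (fun l => e (x l)) else d n
  have einj : ∀ n (x : Fin n → Option (subOf P M C)), Function.Injective x →
      (∀ l, ∃ m, Rel (x l) m) → Function.Injective (fun l => e (x l)) := by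
    intro n x hx h l l' hl
    obtain ⟨m, hm⟩ := h l
    obtain ⟨m', hm'⟩ := h l'
    have hl : e (x l) = e (x l') := hl
    rw [he _ _ hm, he _ _ hm'] at hl
    subst hl
    exact hx (Rel_inj _ _ _ hm hm')
  have ginj : ∀ n, 0 < n → ∀ x : Fin n → Option (subOf P M C), Function.Injective x →
      Function.Injective (g n x) := by
    intro n hn x hx
    simp only [g]
    split_ifs with h1 h2
    · intro l l' hl
      apply hx
      have hl : val (x l) = val (x l') := hl
      have a1 := h1 l
      have a2 := h1 l'
      revert hl a1 a2
      cases x l <;> cases x l' <;> simp [val]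
    · exact hinj n hn _ (einj n x hx h2)
    · exact hd n
  have gperm : ∀ n (hn : 0 < n) (x : Fin n → Option (subOf P M C)) (τ : Equiv.Perm (Fin n)),
      Function.Injective x → ERelP P M n hn (g n (x ∘ τ)) (g n x) := by
    intro n hn x τ hx
    obtain ⟨-, hp, hr, -, -⟩ := hM.1 n hn
    have gx := ginj n hn x hx
    have c1 : (∀ l, (x ∘ τ) l ≠ none) ↔ ∀ l, x l ≠ none :=
      τ.surjective.forall (p := fun l => x l ≠ none) |>.symm
    have c2 : (∀ l, ∃ m, Rel ((x ∘ τ) l) m) ↔ ∀ l, ∃ m, Rel (x l) m :=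
      τ.surjective.forall (p := fun l => ∃ m, Rel (x l) m) |>.symm
    have perm : ∀ v : Fin n → M, Function.Injective v → ERelP P M n hn (v ∘ τ) v := by
      intro v hv
      exact hp v v τ 1 (hr v hv)
    revert gx
    simp only [g, c1, c2]
    split_ifs with h1 h2
    · exact fun gx => perm _ gx
    · intro _
      have := einj n x hx h2
      exact hwd n hn _ _ (this.comp τ.injective) this (perm _ this)
    · exact fun gx => hr _ gx
  let E : (n : ℕ) → (Fin n → Option (subOf P M C)) → (Fin n → Option (subOf P M C)) → Prop :=
    fun n x y => Function.Injective x ∧ Function.Injective y ∧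
      ∃ hn : 0 < n, ERelP P M n hn (g n x) (g n y)
  let Lt : (n : ℕ) → (Fin n → Option (subOf P M C)) → (Fin n → Option (subOf P M C)) → Prop :=
    fun n x y => Function.Injective x ∧ Function.Injective y ∧
      ∃ hn : n ∈ P, LTRelP P M n hn (g n x) (g n y)
  have hE : ∀ n (hn : 0 < n) x y, E n x y ↔ Function.Injective x ∧ Function.Injective y ∧
      ERelP P M n hn (g n x) (g n y) := by
    intro n hn x y
    simp only [E, hn, exists_true_left]
  have hLt : ∀ n (hn : n ∈ P) x y, Lt n x y ↔ Function.Injective x ∧ Function.Injective y ∧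
      LTRelP P M n hn (g n x) (g n y) := by
    intro n hn x y
    simp only [Lt, hn, exists_true_left]
  let _ : (LP P).Structure (Option (subOf P M C)) := mkStr P _ E Lt
  have hfinC : Finite (subOf P M C) := hCfin
  have hD : (Bundled.of (c := (LP P).Structure) (Option (subOf P M C))) ∈ KP P :=
    ⟨inferInstanceAs (Finite (Option (subOf P M C))), pull_isKP P M hM _ E Lt g hE hLt ginj gperm⟩
  rw [← hage] at hD
  obtain ⟨-, ⟨h⟩⟩ := hD
  change Option (subOf P M C) ↪[LP P] M at h
  have gsome : ∀ n (x : Fin n → subOf P M C), g n (fun l => some (x l)) = fun l => (x l : M) := by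
    intro n x
    simp only [g]
    rw [if_pos (by simp)]
  have sinj : ∀ n (x : Fin n → subOf P M C), Function.Injective (fun l => some (x l)) ↔
      Function.Injective (fun l => (x l : M)) := by
    intro n x
    rw [show (fun l => (x l : M)) = Subtype.val ∘ x from rfl,
      Subtype.val_injective.of_comp_iff,
      show (fun l => some (x l)) = some ∘ x from rfl, (Option.some_injective _).of_comp_iff]
  let f : subOf P M C ↪[LP P] M :=
    { toFun := fun c => h (some c)
      inj' := fun c c' hc => Option.some_injective _ (h.injective hc)
      map_fun' := fun f => f.elim
      map_rel' := fun r x => by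
        refine relMap_iff P (fun c => h (some c)) ?_ ?_ r x
        · intro n hn x y
          rw [← emb_E P (subOf P M C).subtype]
          have := emb_E P h n hn (fun l => some (x l)) (fun l => some (y l))
          refine this.trans ?_
          rw [mkStr_E, hE n hn, gsome, gsome, sinj, sinj]
          exact ⟨fun h => h.2.2, fun h => ⟨((hM.1 n hn).1 _ _ h).1, ((hM.1 n hn).1 _ _ h).2, h⟩⟩
        · intro n hn x y
          have hn0 : 0 < n := by have := hP n hn; omega
          rw [← emb_LT P (subOf P M C).subtype]
          have := emb_LT P h n hn (fun l => some (x l)) (fun l => some (y l))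
          refine this.trans ?_
          rw [mkStr_LT, hLt n hn, gsome, gsome, sinj, sinj]
          exact ⟨fun h => h.2.2, fun h => ⟨((hM.2 n hn hn0).1 _ _ h).1,
            ((hM.2 n hn hn0).1 _ _ h).2, h⟩⟩ }
  obtain ⟨β, hβ⟩ := hUH (subOf P M C) Substructure.FG.of_finite f
  have hβ' : ∀ c : subOf P M C, β (c : M) = h (some c) := by
    intro c
    have := DFunLike.congr_fun hβ c
    exact this.symm
  refine ⟨β.symm (h none), ?_⟩
  have lift : ∀ p ∈ insert (a, β.symm (h none)) s, ∃ y : Option (subOf P M C),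
      Rel y p.1 ∧ β p.2 = h y ∧ (y ≠ none → p ∈ s) := by
    intro p hp
    rw [Finset.mem_insert] at hp
    rcases hp with rfl | hp
    · exact ⟨none, rfl, β.apply_symm_apply _, fun h => (h rfl).elim⟩
    · exact ⟨some ⟨p.2, hCB p hp⟩, hp, hβ' ⟨p.2, hCB p hp⟩, fun _ => hp⟩
  refine ⟨?_, ?_⟩
  · intro p hp q hq
    obtain ⟨y, h1, h2, -⟩ := lift p hp
    obtain ⟨z, h3, h4, -⟩ := lift q hq
    rw [← β.injective.eq_iff (a := p.2), h2, h4, h.injective.eq_iff]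
    constructor
    · intro hpq
      rw [← hpq] at h3
      exact Rel_inj _ _ _ h1 h3
    · rintro rfl
      exact Rel_fun _ _ _ h1 h3
  · intro n hn p hp hpinj
    choose x hx1 hx2 hx3 using fun l => lift (p l) (hp l)
    by_cases hnone : ∀ l, x l ≠ none
    · exact hs.2 n hn p (fun l => hx3 l (hnone l)) hpinj
    have hxe : (fun l => e (x l)) = fun l => (p l).1 := funext fun l => he _ _ (hx1 l)
    have hxinj : Function.Injective x := by
      intro l l' hl
      apply hpinj
      have h1 := hx1 l
      rw [hl] at h1
      exact Rel_fun _ _ _ h1 (hx1 l')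
    have hgx : g n x = σ n (fun l => (p l).1) := by
      simp only [g]
      rw [if_neg hnone, if_pos (fun l => ⟨_, hx1 l⟩), hxe]
    have hr : ∀ l, σ n (fun l => (p l).1) l ∈ C := by
      refine hCσ n _ hpinj ?_
      intro l
      have := hp l
      rw [Finset.mem_insert] at this ⊢
      rcases this with h | h
      · left
        rw [h]
      · right
        exact Finset.mem_image_of_mem _ h
    let r : Fin n → subOf P M C := fun l => ⟨_, hr l⟩
    have hσi := hinj n hn _ hpinj
    have key : ERelP P (Option (subOf P M C)) n hn x (fun l => some (r l)) := by
      rw [mkStr_E, hE n hn, hgx, gsome, sinj]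
      exact ⟨hxinj, hσi, (hM.1 n hn).2.2.1 _ hσi⟩
    rw [← emb_E P h, ← emb_E P β.symm.toEmbedding] at key
    convert key using 1
    · ext l
      change _ = β.symm (h (x l))
      rw [← hx2, β.symm_apply_apply]
    · ext l
      change _ = β.symm (h (some (r l)))
      rw [← hβ', β.symm_apply_apply]

/-- Abstract back-and-forth on a countable type. -/
theorem back_forth (M : Type) [Countable M] [DecidableEq M] (G : Finset (M × M) → Prop)
    (h0 : G ∅)
    (hfun : ∀ s, G s → ∀ p ∈ s, ∀ q ∈ s, p.1 = q.1 ↔ p.2 = q.2)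
    (forth : ∀ s, G s → ∀ a, ∃ b, G (insert (a, b) s))
    (back : ∀ s, G s → ∀ b, ∃ a, G (insert (a, b) s)) :
    ∃ α : M ≃ M, ∀ t : Finset M, ∃ s, G s ∧ ∀ m ∈ t, (m, α m) ∈ s := by
  let _ : Encodable M := Encodable.ofCountable M
  let left : M → Order.Cofinal {s // G s} := fun a =>
    { carrier := {f | ∃ b, (a, b) ∈ f.1}
      isCofinal := fun f => by
        obtain ⟨b, hb⟩ := forth f.1 f.2 a
        exact ⟨⟨_, hb⟩, ⟨b, Finset.mem_insert_self _ _⟩, Finset.subset_insert _ _⟩ }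
  let right : M → Order.Cofinal {s // G s} := fun b =>
    { carrier := {f | ∃ a, (a, b) ∈ f.1}
      isCofinal := fun f => by
        obtain ⟨a, ha⟩ := back f.1 f.2 b
        exact ⟨⟨_, ha⟩, ⟨a, Finset.mem_insert_self _ _⟩, Finset.subset_insert _ _⟩ }
  let cof : M ⊕ M → Order.Cofinal {s // G s} := Sum.elim left right
  let I := Order.idealOfCofinals (⟨∅, h0⟩ : {s // G s}) cof
  have hl : ∀ a, ∃ b, ∃ f ∈ I, (a, b) ∈ f.1 := by
    intro a
    obtain ⟨f, ⟨b, hb⟩, hf⟩ :=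
      Order.cofinal_meets_idealOfCofinals (⟨∅, h0⟩ : {s // G s}) cof (Sum.inl a)
    exact ⟨b, f, hf, hb⟩
  have hr : ∀ b, ∃ a, ∃ f ∈ I, (a, b) ∈ f.1 := by
    intro b
    obtain ⟨f, ⟨a, hb⟩, hf⟩ :=
      Order.cofinal_meets_idealOfCofinals (⟨∅, h0⟩ : {s // G s}) cof (Sum.inr b)
    exact ⟨a, f, hf, hb⟩
  have comp : ∀ a b a' b', (∃ f ∈ I, (a, b) ∈ f.1) → (∃ f ∈ I, (a', b') ∈ f.1) →
      (a = a' ↔ b = b') := by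
    rintro a b a' b' ⟨f, hf, h⟩ ⟨f', hf', h'⟩
    obtain ⟨k, -, h1, h2⟩ := I.directed _ hf _ hf'
    exact hfun k.1 k.2 _ (h1 h) _ (h2 h')
  choose F hF using hl
  choose F' hF' using hr
  refine ⟨⟨F, F', fun a => ?_, fun b => ?_⟩, fun t => ?_⟩
  · exact (comp _ _ _ _ (hF' (F a)) (hF a)).2 rfl
  · exact (comp _ _ _ _ (hF (F' b)) (hF' b)).1 rfl
  · suffices ∃ f ∈ I, ∀ m ∈ t, (m, F m) ∈ f.1 by
      obtain ⟨f, -, hf⟩ := this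
      exact ⟨f.1, f.2, hf⟩
    induction t using Finset.induction_on with
    | empty =>
      exact ⟨_, Order.mem_idealOfCofinals _ _, by simp⟩
    | insert m t hm ih =>
      obtain ⟨f, hf, h⟩ := ih
      obtain ⟨f', hf', h'⟩ := hF m
      obtain ⟨k, hk, h1, h2⟩ := I.directed _ hf _ hf'
      refine ⟨k, hk, fun x hx => ?_⟩
      rcases Finset.mem_insert.1 hx with rfl | hx
      · exact h2 h'
      · exact h1 (h x hx)

/-- the natural homomorphism
`Aut(M) → ∏_{i ∈ P} Aut(M_i, <_i) × ∏_{i ∉ P} Sym(M_i)` is surjective.  A family of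
permutations `σ_i` of the sets `M_i` of `E_i`-classes is presented by maps on
representative tuples: `σ i` sends the class of `v` to the class of `σ i v`. -/
theorem KP_limit_product_surjective (P : Set ℕ) (hP : ∀ n ∈ P, 3 ≤ n)
    (M : Type) [(LP P).Structure M] [Countable M]
    (hUH : (LP P).IsUltrahomogeneous M) (hage : (LP P).age M = KP P)
    (σ : (i : ℕ) → (Fin i → M) → (Fin i → M))
    -- σ i maps injective tuples to injective tuples
    (hinj : ∀ (i : ℕ), 0 < i → ∀ v : Fin i → M, Function.Injective v →
        Function.Injective (σ i v))
    -- σ i is well defined on E_i-classes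
    (hwd : ∀ (i : ℕ) (hi : 0 < i), ∀ v w : Fin i → M, Function.Injective v →
        Function.Injective w → ERelP P M i hi v w → ERelP P M i hi (σ i v) (σ i w))
    -- σ i is injective on E_i-classes
    (hmono : ∀ (i : ℕ) (hi : 0 < i), ∀ v w : Fin i → M, Function.Injective v →
        Function.Injective w → ERelP P M i hi (σ i v) (σ i w) → ERelP P M i hi v w)
    -- σ i is surjective on E_i-classes (so it is a permutation of M_i)
    (hsurj : ∀ (i : ℕ) (hi : 0 < i), ∀ w : Fin i → M, Function.Injective w →
        ∃ v : Fin i → M, Function.Injective v ∧ ERelP P M i hi (σ i v) w)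
    -- when i ∈ P, σ i preserves the order <_i
    (hord : ∀ (i : ℕ) (hiP : i ∈ P), ∀ v w : Fin i → M, Function.Injective v →
        Function.Injective w → (LTRelP P M i hiP v w ↔ LTRelP P M i hiP (σ i v) (σ i w))) :
    ∃ α : M ≃[LP P] M, ∀ (i : ℕ) (hi : 0 < i), ∀ v : Fin i → M, Function.Injective v →
      ERelP P M i hi (fun l => α (v l)) (σ i v) := by
    classical
  have hM := isKP_of_age P M hP hage
  -- an inverse family
  have hτ : ∀ (i : ℕ) (w : Fin i → M), ∃ v : Fin i → M, ∀ hi : 0 < i, Function.Injective w →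
      Function.Injective v ∧ ERelP P M i hi (σ i v) w := by
    intro i w
    by_cases h : 0 < i ∧ Function.Injective w
    · obtain ⟨v, hv⟩ := hsurj i h.1 w h.2
      exact ⟨v, fun _ _ => hv⟩
    · exact ⟨w, fun h1 h2 => (h ⟨h1, h2⟩).elim⟩
  choose τ hτ using hτ
  have symm : ∀ {i : ℕ} {hi : 0 < i} {x y : Fin i → M}, ERelP P M i hi x y → ERelP P M i hi y x :=
    fun {i hi x y} => (hM.1 i hi).2.2.2.1 x y
  have trans : ∀ {i : ℕ} {hi : 0 < i} {x y z : Fin i → M}, ERelP P M i hi x y →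
      ERelP P M i hi y z → ERelP P M i hi x z :=
    fun {i hi x y z} => (hM.1 i hi).2.2.2.2 x y z
  have τinj : ∀ (i : ℕ), 0 < i → ∀ v : Fin i → M, Function.Injective v →
      Function.Injective (τ i v) := fun i hi v hv => (hτ i v hi hv).1
  have τwd : ∀ (i : ℕ) (hi : 0 < i), ∀ v w : Fin i → M, Function.Injective v →
      Function.Injective w → ERelP P M i hi v w → ERelP P M i hi (τ i v) (τ i w) := by
    intro i hi v w hv hw h
    exact hmono i hi _ _ (τinj i hi v hv) (τinj i hi w hw)
      (trans (hτ i v hi hv).2 (trans h (symm (hτ i w hi hw).2)))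
  have τσ : ∀ (i : ℕ) (hi : 0 < i), ∀ v : Fin i → M, Function.Injective v →
      ERelP P M i hi (τ i (σ i v)) v := by
    intro i hi v hv
    have h := hτ i (σ i v) hi (hinj i hi v hv)
    exact hmono i hi _ _ h.1 hv h.2
  obtain ⟨α, hα⟩ := back_forth M (GoodFor P M σ) ⟨by simp, fun n hn p hp => by
      simpa using hp ⟨0, hn⟩⟩ (fun s hs => hs.1)
    (goodFor_forth P M hM hP hUH hage σ hinj hwd)
    (by
      intro s hs b
      obtain ⟨a, ha⟩ := goodFor_forth P M hM hP hUH hage τ τinj τwd _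
        (goodFor_swap P M hM σ τ τwd τσ s hs) b
      refine ⟨a, ?_⟩
      have := goodFor_swap P M hM τ σ hwd (fun i hi v hv => (hτ i v hi hv).2) _ ha
      rw [Finset.image_insert, Finset.image_image, Prod.swap_swap_eq, Finset.image_id] at this
      exact this)
  have key : ∀ (i : ℕ) (hi : 0 < i), ∀ v : Fin i → M, Function.Injective v →
      ERelP P M i hi (α ∘ v) (σ i v) := by
    intro i hi v hv
    obtain ⟨s, hs, h⟩ := hα (Finset.univ.image v)
    exact hs.2 i hi (fun l => (v l, α (v l)))
      (fun l => h _ (Finset.mem_image_of_mem _ (Finset.mem_univ l))) hv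
  have keyE : ∀ n hn (x y : Fin n → M), ERelP P M n hn (α ∘ x) (α ∘ y) ↔ ERelP P M n hn x y := by
    intro n hn x y
    constructor
    · intro h
      obtain ⟨hx, hy⟩ := (hM.1 n hn).1 _ _ h
      have hx := hx.of_comp
      have hy := hy.of_comp
      exact hmono n hn x y hx hy (trans (symm (key n hn x hx)) (trans h (key n hn y hy)))
    · intro h
      obtain ⟨hx, hy⟩ := (hM.1 n hn).1 _ _ h
      exact trans (key n hn x hx) (trans (hwd n hn x y hx hy h) (symm (key n hn y hy)))
  have keyL : ∀ n hn (x y : Fin n → M),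
      LTRelP P M n hn (α ∘ x) (α ∘ y) ↔ LTRelP P M n hn x y := by
    intro n hn x y
    have hn0 : 0 < n := by have := hP n hn; omega
    obtain ⟨h1, h2, -⟩ := hM.2 n hn hn0
    constructor
    · intro h
      obtain ⟨hx, hy⟩ := h1 _ _ h
      have hx := hx.of_comp
      have hy := hy.of_comp
      exact (hord n hn x y hx hy).2 (h2 _ _ _ _ (key n hn0 x hx) (key n hn0 y hy) h)
    · intro h
      obtain ⟨hx, hy⟩ := h1 _ _ h
      exact h2 _ _ _ _ (symm (key n hn0 x hx)) (symm (key n hn0 y hy))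
        ((hord n hn x y hx hy).1 h)
  exact ⟨{ α with
    map_fun' := fun f => f.elim
    map_rel' := fun r x => relMap_iff P α keyE keyL r x }, key⟩
end

section
/- Let L* be a relational language containing, for each n ≥ 1 and each E_n-class V of n-element subsets of M₀, a distinct n-ary relation symbol P_V, and let M* be the L*-expansion of the underlying set of M₀ in which P_V holds exactly on the n-tuples of pairwise distinct elements whose underlying set lies in V. Then for every finite sublanguage L' ⊆ L*, the reduct M*(L') of M* to L' is an ultrahomogeneous structure that is universal for the class K(L') of all finite L'-structures in which every relation of arity l holds only on tuples of pairwise distinct elements, is invariant under all permutations of its arguments, and any two distinct relations of L' of the same arity l have disjoint interpretations; i.e., every member of K(L') embeds into M*(L'), and every isomorphism between finite substructures of M*(L') extends to an automorphism of M*(L'). -/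
open FirstOrder Language Structure CategoryTheory

/-- A purely relational language with relation symbols `ι k` in each arity `k`. -/
def LStar (ι : ℕ → Type) : FirstOrder.Language where
  Functions := fun _ => Empty
  Relations := ι

/-- The structure interpreting each symbol `i : ι k` by the set of tuples `cls k i`. -/
def LStarStructure (ι : ℕ → Type) (M : Type*) (cls : ∀ k, ι k → (Fin k → M) → Prop) :
    (LStar ι).Structure M where
  funMap := fun f => f.elim
  RelMap := fun {k} i v => cls k i v

/-- The class `K(L')`: finite `L'`-structures in which every relation holds only on
tuples of pairwise distinct elements, is invariant under all permutations of its
arguments, and distinct relations of the same arity have disjoint interpretations. -/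
def IsKL (L : FirstOrder.Language) (A : Type*) [L.Structure A] : Prop :=
  (∀ (k : ℕ) (R : L.Relations k) (v : Fin k → A),
      Structure.RelMap R v → Function.Injective v) ∧
  (∀ (k : ℕ) (R : L.Relations k) (v : Fin k → A) (σ : Equiv.Perm (Fin k)),
      Structure.RelMap R v → Structure.RelMap R (v ∘ σ)) ∧
  (∀ (k : ℕ) (R R' : L.Relations k) (v : Fin k → A), R ≠ R' →
      Structure.RelMap R v → ¬ Structure.RelMap R' v)

instance L0_isRelational : L₀.IsRelational := fun _ => inferInstanceAs (IsEmpty Empty)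

instance LStar_isRelational (ι : ℕ → Type) : (LStar ι).IsRelational :=
  fun _ => inferInstanceAs (IsEmpty Empty)

/-- The `L₀`-structure with prescribed relations `E_n`. -/
def mkL0 (D : Type*) (E : ∀ n, (Fin n → D) → (Fin n → D) → Prop) : L₀.Structure D where
  funMap := fun f => f.elim
  RelMap := fun {_} R v => E R.1 (fun j => v (Fin.cast R.2.2.symm (Fin.castAdd R.1 j)))
    (fun j => v (Fin.cast R.2.2.symm (Fin.natAdd R.1 j)))

theorem ERel_mkL0 (D : Type*) (E : ∀ n, (Fin n → D) → (Fin n → D) → Prop) (n : ℕ) (hn : 0 < n)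
    (x y : Fin n → D) : @ERel D (mkL0 D E) n hn x y ↔ E n x y := by
  have h1 : (fun j => Fin.append x y (Fin.cast rfl (Fin.castAdd n j))) = x := by
    funext j; exact Fin.append_left x y j
  have h2 : (fun j => Fin.append x y (Fin.cast rfl (Fin.natAdd n j))) = y := by
    funext j; exact Fin.append_right x y j
  change E n (fun j => Fin.append x y (Fin.cast rfl (Fin.castAdd n j)))
    (fun j => Fin.append x y (Fin.cast rfl (Fin.natAdd n j))) ↔ _
  rw [h1, h2]

theorem comp_append_aux {A B : Type*} (f : A → B) {n m : ℕ} (x : Fin n → A) (y : Fin m → A) :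
    f ∘ Fin.append x y = Fin.append (f ∘ x) (f ∘ y) := by
  funext j
  induction j using Fin.addCases <;> simp

theorem ERel_map {A B : Type*} [L₀.Structure A] [L₀.Structure B] (f : A ↪[L₀] B) (n : ℕ)
    (hn : 0 < n) (x y : Fin n → A) : ERel B n hn (f ∘ x) (f ∘ y) ↔ ERel A n hn x y := by
  have := f.map_rel (Esymb n hn) (Fin.append x y)
  rw [comp_append_aux] at this
  exact this

/-- An injective map preserving all `E_n` is an embedding. -/
def embOfERel {A B : Type*} [L₀.Structure A] [L₀.Structure B] (f : A → B)
    (hf : Function.Injective f)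
    (h : ∀ n (hn : 0 < n) (x y : Fin n → A), ERel B n hn (f ∘ x) (f ∘ y) ↔ ERel A n hn x y) :
    A ↪[L₀] B where
  toFun := f
  inj' := hf
  map_fun' := fun g => g.elim
  map_rel' := by
    rintro k ⟨n, hn, rfl⟩ v
    have := h n hn (fun j => v (Fin.castAdd n j)) (fun j => v (Fin.natAdd n j))
    unfold ERel at this
    rw [← comp_append_aux, Fin.append_castAdd_natAdd] at this
    exact this

/-- The substructure on an arbitrary subset. -/
def subL0 {M : Type*} [L₀.Structure M] (C : Set M) : L₀.Substructure M where
  carrier := C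
  fun_mem := fun f => f.elim

theorem isK0_of_age {M : Type} [L₀.Structure M] (hage : L₀.age M = K₀) : IsK0Struct M := by
  have key : ∀ C : Set M, C.Finite → IsK0Struct (subL0 C) := by
    intro C hC
    have hfin : Finite (subL0 C) := hC
    have : (⟨subL0 C, inferInstance⟩ : Bundled L₀.Structure) ∈ L₀.age M :=
      ⟨Structure.fg_iff_finite.2 hfin, ⟨(subL0 C).subtype⟩⟩
    rw [hage] at this
    exact this.2
  have key2 : ∀ n (hn : 0 < n) (x y z : Fin n → M), ∃ (C : Set M) (x' y' z' : Fin n → subL0 C),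
      IsK0Struct (subL0 C) ∧ x = (subL0 C).subtype ∘ x' ∧ y = (subL0 C).subtype ∘ y' ∧
      z = (subL0 C).subtype ∘ z' := by
    intro n hn x y z
    refine ⟨Set.range x ∪ Set.range y ∪ Set.range z, fun j => ⟨x j, Or.inl (Or.inl ⟨j, rfl⟩)⟩,
      fun j => ⟨y j, Or.inl (Or.inr ⟨j, rfl⟩)⟩, fun j => ⟨z j, Or.inr ⟨j, rfl⟩⟩,
      key _ (((Set.finite_range x).union (Set.finite_range y)).union (Set.finite_range z)),
      rfl, rfl, rfl⟩
  intro n hn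
  refine ⟨?_, ?_, ?_, ?_, ?_⟩
  · intro x y h
    obtain ⟨C, x', y', -, hC, rfl, rfl, -⟩ := key2 n hn x y y
    rw [ERel_map] at h
    have := (hC n hn).1 _ _ h
    exact ⟨(subL0 C).subtype.injective.comp this.1, (subL0 C).subtype.injective.comp this.2⟩
  · intro x y σ τ h
    obtain ⟨C, x', y', -, hC, rfl, rfl, -⟩ := key2 n hn x y y
    rw [ERel_map] at h
    have := (hC n hn).2.1 _ _ σ τ h
    rw [← ERel_map (subL0 C).subtype] at this
    exact this
  · intro x h
    obtain ⟨C, x', -, -, hC, rfl, -, -⟩ := key2 n hn x x x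
    rw [ERel_map]
    exact (hC n hn).2.2.1 _ h.of_comp
  · intro x y h
    obtain ⟨C, x', y', -, hC, rfl, rfl, -⟩ := key2 n hn x y y
    rw [ERel_map] at h ⊢
    exact (hC n hn).2.2.2.1 _ _ h
  · intro x y z h h'
    obtain ⟨C, x', y', z', hC, rfl, rfl, rfl⟩ := key2 n hn x y z
    rw [ERel_map] at h h' ⊢
    exact (hC n hn).2.2.2.2 _ _ _ h h'

theorem ext_main
    (M₀ : Type) [L₀.Structure M₀]
    (hUH : L₀.IsUltrahomogeneous M₀) (hage : L₀.age M₀ = K₀)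
    (ι : ℕ → Type) (cls : ∀ k, ι k → (Fin k → M₀) → Prop)
    (harity : ∀ k, ι k → 0 < k)
    (hcls : ∀ (k : ℕ) (hk : 0 < k) (i : ι k), ∃ x : Fin k → M₀, Function.Injective x ∧
        ∀ v : Fin k → M₀, cls k i v ↔ (Function.Injective v ∧ ERel M₀ k hk x v))
    (hsurj : ∀ (k : ℕ) (_ : 0 < k) (x : Fin k → M₀), Function.Injective x →
        ∃ i : ι k, cls k i x)
    (hdistinct : ∀ (k : ℕ) (i j : ι k) (v : Fin k → M₀), cls k i v → cls k j v → i = j)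
    (s : ∀ k, Set (ι k)) (hs : {p : Σ k, ι k | p.2 ∈ s p.1}.Finite)
    (A : Type) [Finite A] (Q : ∀ k, ι k → (Fin k → A) → Prop)
    (hQinj : ∀ k i v, i ∈ s k → Q k i v → Function.Injective v)
    (hQperm : ∀ k i v (σ : Equiv.Perm (Fin k)), i ∈ s k → Q k i v → Q k i (v ∘ σ))
    (hQdis : ∀ k i j v, i ∈ s k → j ∈ s k → Q k i v → Q k j v → i = j)
    (B : Set A) (g : B → M₀) (hg : Function.Injective g)
    (hgQ : ∀ k i (w : Fin k → B), i ∈ s k → (Q k i (Subtype.val ∘ w) ↔ cls k i (g ∘ w))) :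
    ∃ h : A → M₀, Function.Injective h ∧ (∀ b : B, h b = g b) ∧
      ∀ k i w, i ∈ s k → (Q k i w ↔ cls k i (h ∘ w)) := by
  classical
  have hK := isK0_of_age hage
  have clsInj : ∀ k i v, cls k i v → Function.Injective v := by
    intro k i v h
    obtain ⟨x, -, hx⟩ := hcls k (harity k i) i
    exact ((hx v).1 h).1
  have clsE : ∀ k (hk : 0 < k) i v w, cls k i v → (cls k i w ↔ ERel M₀ k hk v w) := by
    intro k hk i v w h
    obtain ⟨x, -, hx⟩ := hcls k hk i
    have h1 := ((hx v).1 h).2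
    constructor
    · intro h2
      exact (hK k hk).2.2.2.2 _ _ _ ((hK k hk).2.2.2.1 _ _ h1) ((hx w).1 h2).2
    · intro h2
      exact (hx w).2 ⟨((hK k hk).1 _ _ h2).2, (hK k hk).2.2.2.2 _ _ _ h1 h2⟩
  have clsPerm : ∀ k i v (σ : Equiv.Perm (Fin k)), cls k i v → cls k i (v ∘ σ) := by
    intro k i v σ h
    have hk := harity k i
    refine (clsE k hk i v _ h).2 ?_
    have := (hK k hk).2.1 v v 1 σ ((hK k hk).2.2.1 v (clsInj _ _ _ h))
    exact this
  have hrep : ∀ p : (Σ k, ι k), ∃ x : Fin p.1 → M₀, cls p.1 p.2 x := by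
    rintro ⟨k, i⟩
    obtain ⟨x, hx, hx'⟩ := hcls k (harity k i) i
    exact ⟨x, (hx' x).2 ⟨hx, (hK k (harity k i)).2.2.1 x hx⟩⟩
  choose rep hrep using hrep
  -- the finite set of parameters
  let C : Set M₀ := Set.range g ∪ ⋃ p ∈ {p : Σ k, ι k | p.2 ∈ s p.1}, Set.range (rep p)
  have hC : C.Finite :=
    (Set.finite_range g).union (hs.biUnion fun p _ => Set.finite_range (rep p))
  have hgC : ∀ b, g b ∈ C := fun b => Or.inl ⟨b, rfl⟩
  have hrepC : ∀ k (i : ι k), i ∈ s k → ∀ j, rep ⟨k, i⟩ j ∈ C := fun k i hi j =>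
    Or.inr (Set.mem_biUnion (show (⟨k, i⟩ : Σ k, ι k) ∈ {p : Σ k, ι k | p.2 ∈ s p.1} from hi)
      ⟨j, rfl⟩)
  haveI hCfin : Finite (subL0 C) := hC
  let D : Type := (subL0 C) ⊕ {a : A // a ∉ B}
  let jC : subL0 C → D := Sum.inl
  let jA : A → D := fun a => if h : a ∈ B then Sum.inl ⟨g ⟨a, h⟩, hgC _⟩ else Sum.inr ⟨a, h⟩
  have jC_inj : Function.Injective jC := Sum.inl_injective
  have jA_B : ∀ b : B, jA b = jC ⟨g b, hgC b⟩ := by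
    intro b
    simp only [jA, jC, b.2, dif_pos]
  have jA_eq : ∀ a c, jA a = jC c → ∃ h : a ∈ B, g ⟨a, h⟩ = c := by
    intro a c h
    by_cases ha : a ∈ B
    · refine ⟨ha, ?_⟩
      have h2 := (jA_B ⟨a, ha⟩).symm.trans h
      exact congrArg Subtype.val (jC_inj h2)
    · simp [jA, jC, ha] at h
  have jA_inj : Function.Injective jA := by
    intro a a' h
    by_cases ha : a ∈ B
    · have h1 := jA_B ⟨a, ha⟩
      obtain ⟨h3, h4⟩ := jA_eq a' _ (h.symm.trans h1)
      exact (congrArg Subtype.val (hg h4)).symm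
    · by_cases ha' : a' ∈ B
      · have h1 := jA_B ⟨a', ha'⟩
        obtain ⟨h3, h4⟩ := jA_eq a _ (h.trans h1)
        exact (ha h3).elim
      · simp only [jA, ha, ha', dif_neg, not_false_eq_true] at h
        exact congrArg Subtype.val (Sum.inr_injective h)
  -- compatibility on overlaps
  have compat : ∀ k i (w : Fin k → A) (w' : Fin k → subL0 C), i ∈ s k → jA ∘ w = jC ∘ w' →
      (Q k i w ↔ cls k i (Subtype.val ∘ w')) := by
    intro k i w w' hi h
    have h1 : ∀ j, ∃ h : w j ∈ B, g ⟨w j, h⟩ = w' j := fun j => jA_eq _ _ (congrFun h j)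
    choose h2 h3 using h1
    have := hgQ k i (fun j => ⟨w j, h2 j⟩) hi
    have e1 : g ∘ (fun j => (⟨w j, h2 j⟩ : B)) = Subtype.val ∘ w' := funext h3
    rw [e1] at this
    exact this
  let Col : ∀ n, (Fin n → D) → ι n → Prop := fun n v i =>
    (∃ w : Fin n → subL0 C, v = jC ∘ w ∧ cls n i (Subtype.val ∘ w)) ∨
    (i ∈ s n ∧ ∃ w : Fin n → A, v = jA ∘ w ∧ Q n i w)
  let E : ∀ n, (Fin n → D) → (Fin n → D) → Prop := fun n v w =>
    Function.Injective v ∧ Function.Injective w ∧ ∀ i, Col n v i ↔ Col n w i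
  have ColC : ∀ n (w : Fin n → subL0 C) i, Col n (jC ∘ w) i ↔ cls n i (Subtype.val ∘ w) := by
    intro n w i
    constructor
    · rintro (⟨w', h, h'⟩ | ⟨hi, w', h, h'⟩)
      · rw [jC_inj.comp_left h]; exact h'
      · exact (compat n i w' w hi h.symm).1 h'
    · intro h
      exact Or.inl ⟨w, rfl, h⟩
  have ColA : ∀ n (w : Fin n → A) i, i ∈ s n → (Col n (jA ∘ w) i ↔ Q n i w) := by
    intro n w i hi
    constructor
    · rintro (⟨w', h, h'⟩ | ⟨_, w', h, h'⟩)
      · exact (compat n i w w' hi h).2 h'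
      · rw [jA_inj.comp_left h]; exact h'
    · intro h
      exact Or.inr ⟨hi, w, rfl, h⟩
  have ColAuniq : ∀ n (w : Fin n → A) i j, i ∈ s n → Q n i w → Col n (jA ∘ w) j → j = i := by
    intro n w i j hi h
    rintro (⟨w', h1, h'⟩ | ⟨hj, w', h1, h'⟩)
    · exact hdistinct n _ _ _ h' ((compat n i w w' hi h1).1 h)
    · rw [← jA_inj.comp_left h1] at h'
      exact hQdis n _ _ _ hj hi h' h
  have ColPerm1 : ∀ n v (σ : Equiv.Perm (Fin n)) i, Col n v i → Col n (v ∘ σ) i := by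
    rintro n v σ i (⟨w', rfl, h'⟩ | ⟨hj, w', rfl, h'⟩)
    · exact Or.inl ⟨w' ∘ σ, rfl, clsPerm n i _ σ h'⟩
    · exact Or.inr ⟨hj, w' ∘ σ, rfl, hQperm n i _ σ hj h'⟩
  have ColPerm : ∀ n v (σ : Equiv.Perm (Fin n)) i, Col n (v ∘ σ) i ↔ Col n v i := by
    intro n v σ i
    refine ⟨fun h => ?_, ColPerm1 n v σ i⟩
    have := ColPerm1 n _ σ⁻¹ i h
    have e : (v ∘ σ) ∘ (σ⁻¹ : Equiv.Perm (Fin n)) = v := by funext j; simp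
    rwa [e] at this
  letI : L₀.Structure D := mkL0 D E
  have ED : ∀ n (hn : 0 < n) (x y : Fin n → D), ERel D n hn x y ↔ E n x y := ERel_mkL0 D E
  have hDK : IsK0Struct D := by
    intro n hn
    simp only [ED]
    refine ⟨fun x y h => ⟨h.1, h.2.1⟩, fun x y σ τ h => ⟨h.1.comp σ.injective,
      h.2.1.comp τ.injective, fun i => ?_⟩, fun x h => ⟨h, h, fun i => Iff.rfl⟩,
      fun x y h => ⟨h.2.1, h.1, fun i => (h.2.2 i).symm⟩,
      fun x y z h h' => ⟨h.1, h'.2.1, fun i => (h.2.2 i).trans (h'.2.2 i)⟩⟩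
    rw [ColPerm, ColPerm]
    exact h.2.2 i
  haveI hDfin : Finite D := inferInstanceAs (Finite ((subL0 C) ⊕ {a : A // a ∉ B}))
  have hDage : (⟨D, inferInstance⟩ : Bundled L₀.Structure) ∈ L₀.age M₀ := by
    rw [hage]; exact ⟨hDfin, hDK⟩
  have hDne : Nonempty (D ↪[L₀] M₀) := hDage.2
  let eC : subL0 C ↪[L₀] D := embOfERel jC jC_inj (by
    intro n hn x y
    rw [ED, ← ERel_map (subL0 C).subtype]
    change E n (jC ∘ x) (jC ∘ y) ↔ ERel M₀ n hn (Subtype.val ∘ x) (Subtype.val ∘ y)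
    constructor
    · rintro ⟨h1, h2, h3⟩
      have h1' : Function.Injective ((Subtype.val : subL0 C → M₀) ∘ x) :=
        Subtype.val_injective.comp h1.of_comp
      obtain ⟨i, hi⟩ := hsurj n hn _ h1'
      have := (h3 i)
      rw [ColC, ColC] at this
      exact (clsE n hn i _ _ hi).1 (this.1 hi)
    · intro h
      have hi := (hK n hn).1 _ _ h
      refine ⟨jC_inj.comp hi.1.of_comp, jC_inj.comp hi.2.of_comp, fun i => ?_⟩
      rw [ColC, ColC]
      constructor
      · intro h'
        exact (clsE n hn i _ _ h').2 h
      · intro h'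
        exact (clsE n hn i _ _ h').2 ((hK n hn).2.2.2.1 _ _ h))
  obtain ⟨f, hf⟩ := hUH.extend_embedding (Structure.fg_iff_finite.2 hCfin) (T := D)
    (subL0 C).subtype eC
  have hfC : ∀ c : subL0 C, f (jC c) = c := by
    intro c
    have := congrArg (fun (F : subL0 C ↪[L₀] M₀) => F c) hf
    exact this.symm
  refine ⟨f ∘ jA, f.injective.comp jA_inj, ?_, ?_⟩
  · intro b
    change f (jA b) = g b
    rw [jA_B, hfC]
  · intro k i w hi
    have hk := harity k i
    let r : Fin k → subL0 C := fun j => ⟨rep ⟨k, i⟩ j, hrepC k i hi j⟩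
    have hr : cls k i (Subtype.val ∘ r) := hrep ⟨k, i⟩
    have hfr : (Subtype.val ∘ r : Fin k → M₀) = f ∘ (jC ∘ r) := by
      funext j
      exact (hfC (r j)).symm
    rw [clsE k hk i _ _ hr, hfr, Function.comp_assoc, ERel_map f, ED]
    constructor
    · intro h
      refine ⟨jC_inj.comp (clsInj _ _ _ hr).of_comp, jA_inj.comp (hQinj _ _ _ hi h), fun j => ?_⟩
      rw [ColC]
      constructor
      · intro h'
        rw [hdistinct k _ _ _ h' hr]
        exact (ColA k w i hi).2 h
      · intro h'
        rw [ColAuniq k w i j hi h h']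
        exact hr
    · rintro ⟨-, -, h⟩
      exact (ColA k w i hi).1 ((h i).1 ((ColC k r i).2 hr))

/-- let `M*` be the expansion of `M₀` by predicates `P_V` for all
`E_n`-classes `V` (the symbols of arity `k` are indexed by `ι k`, and `cls k i` is the
set of injective `k`-tuples whose underlying set lies in the class indexed by `i`).
Then for every finite sublanguage `L' ⊆ L*` (given by the sets `s k` of symbols), the
reduct `M*(L')` is ultrahomogeneous and universal for the class `K(L')` of finite
`L'`-structures with irreflexive, permutation-invariant and pairwise disjoint
relations. -/
theorem Mstar_finite_reducts_ultrahomogeneous_universal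
    (M₀ : Type) [L₀.Structure M₀] [Countable M₀]
    (hUH : L₀.IsUltrahomogeneous M₀) (hage : L₀.age M₀ = K₀)
    (ι : ℕ → Type) (cls : ∀ k, ι k → (Fin k → M₀) → Prop)
    -- symbols exist only in arities `k ≥ 1`
    (harity : ∀ k, ι k → 0 < k)
    -- each symbol is interpreted by exactly one `E_k`-class
    (hcls : ∀ (k : ℕ) (hk : 0 < k) (i : ι k), ∃ x : Fin k → M₀, Function.Injective x ∧
        ∀ v : Fin k → M₀, cls k i v ↔ (Function.Injective v ∧ ERel M₀ k hk x v))
    -- every `E_k`-class is named by some symbol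
    (hsurj : ∀ (k : ℕ) (hk : 0 < k) (x : Fin k → M₀), Function.Injective x →
        ∃ i : ι k, cls k i x)
    -- distinct symbols name distinct classes
    (hdistinct : ∀ (k : ℕ) (i j : ι k) (v : Fin k → M₀), cls k i v → cls k j v → i = j) :
    ∀ (s : ∀ k, Set (ι k)), {p : Σ k, ι k | p.2 ∈ s p.1}.Finite →
      @Language.IsUltrahomogeneous (LStar fun k => {i : ι k // i ∈ s k}) M₀
        (LStarStructure (fun k => {i : ι k // i ∈ s k}) M₀ fun k i v => cls k i.1 v) ∧
      ∀ (A : Type) (instA : (LStar fun k => {i : ι k // i ∈ s k}).Structure A), Finite A →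
        @IsKL (LStar fun k => {i : ι k // i ∈ s k}) A instA →
        Nonempty (@Language.Embedding (LStar fun k => {i : ι k // i ∈ s k}) A M₀ instA
          (LStarStructure (fun k => {i : ι k // i ∈ s k}) M₀ fun k i v => cls k i.1 v)) := by
  intro s hs
  let L' : FirstOrder.Language := LStar fun k => {i : ι k // i ∈ s k}
  letI instM : L'.Structure M₀ :=
    LStarStructure (fun k => {i : ι k // i ∈ s k}) M₀ fun k i v => cls k i.1 v
  haveI : L'.IsRelational := LStar_isRelational _
  have main : ∀ (A : Type) (instA : L'.Structure A), Finite A → @IsKL L' A instA →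
      ∀ (B : Set A) (g : B → M₀), Function.Injective g →
      (∀ k (R : L'.Relations k) (w : Fin k → B),
        Structure.RelMap R (Subtype.val ∘ w) ↔ Structure.RelMap R (g ∘ w)) →
      ∃ h : A ↪[L'] M₀, ∀ b : B, h b = g b := by
    intro A instA hA hKL B g hg hgQ
    obtain ⟨h1, h2, h3⟩ := hKL
    obtain ⟨h, hinj, hB, hQ⟩ := ext_main M₀ hUH hage ι cls harity hcls hsurj hdistinct s hs A
      (fun k i v => ∃ hi : i ∈ s k, instA.RelMap (show L'.Relations k from ⟨i, hi⟩) v)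
      (fun k i v _ ⟨hi, h⟩ => h1 k _ v h)
      (fun k i v σ _ ⟨hi, h⟩ => ⟨hi, h2 k _ v σ h⟩)
      (fun k i j v _ _ ⟨hi, h⟩ ⟨hj, h'⟩ => by
        by_contra hne
        exact h3 k _ _ v (fun e => hne (congrArg Subtype.val e)) h h')
      B g hg
      (fun k i w hi => by
        have := hgQ k ⟨i, hi⟩ w
        exact ⟨fun ⟨_, h⟩ => this.1 h, fun h => ⟨hi, this.2 h⟩⟩)
    refine ⟨⟨⟨h, hinj⟩, fun f => isEmptyElim f, ?_⟩, hB⟩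
    intro k R v
    have := hQ k R.1 v R.2
    exact ⟨fun h => (this.2 h).2, fun h => this.1 ⟨R.2, h⟩⟩
  have hMKL : IsKL L' M₀ := by
    have hK := isK0_of_age hage
    refine ⟨?_, ?_, ?_⟩
    · intro k R v h
      obtain ⟨x, -, hx⟩ := hcls k (harity k R.1) R.1
      exact ((hx v).1 h).1
    · intro k R v σ h
      obtain ⟨x, -, hx⟩ := hcls k (harity k R.1) R.1
      have h1 := (hx v).1 h
      exact (hx _).2 ⟨h1.1.comp σ.injective, (hK k (harity k R.1)).2.1 x v 1 σ h1.2⟩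
    · intro k R R' v hne h h'
      exact hne (Subtype.ext (hdistinct k R.1 R'.1 v h h'))
  refine ⟨?_, ?_⟩
  · change L'.IsUltrahomogeneous M₀
    rw [isUltrahomogeneous_iff_IsExtensionPair Structure.cg_of_countable,
      isExtensionPair_iff_exists_embedding_closure_singleton_sup]
    intro S hS f m
    let T : L'.Substructure M₀ := Substructure.closure L' {m} ⊔ S
    have hST : S ≤ T := le_sup_right
    have hT : T.FG := (Substructure.fg_closure_singleton m).sup hS
    have hTfin : Finite T := hT.finite
    have hTKL : IsKL L' T := by
      refine ⟨?_, ?_, ?_⟩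
      · intro k R v h
        exact (hMKL.1 k R (T.subtype ∘ v) ((T.subtype.map_rel R v).2 h)).of_comp
      · intro k R v σ h
        exact (T.subtype.map_rel R (v ∘ σ)).1
          (hMKL.2.1 k R (T.subtype ∘ v) σ ((T.subtype.map_rel R v).2 h))
      · intro k R R' v hne h h'
        exact hMKL.2.2 k R R' (T.subtype ∘ v) hne ((T.subtype.map_rel R v).2 h)
          ((T.subtype.map_rel R' v).2 h')
    obtain ⟨h, hh⟩ := main T inferInstance hTfin hTKL {t : T | (t : M₀) ∈ S}
      (fun b => f ⟨b.1.1, b.2⟩)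
      (fun b b' e => by
        have := congrArg Subtype.val (f.injective e)
        exact Subtype.ext (Subtype.ext this))
      (fun k R w => by
        have h1 := f.map_rel R (fun j => ⟨(w j).1.1, (w j).2⟩)
        have h2 := S.subtype.map_rel R (fun j => ⟨(w j).1.1, (w j).2⟩)
        have h3 := T.subtype.map_rel R (Subtype.val ∘ w)
        exact (h3.symm.trans h2).trans h1.symm)
    refine ⟨h, ?_⟩
    ext x
    exact (hh ⟨⟨x.1, hST x.2⟩, x.2⟩).symm
  · intro A instA hA hKL
    obtain ⟨h, -⟩ := main A instA hA hKL ∅ (fun b => b.2.elim) (fun b => b.2.elim) (by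
      intro k R w
      have hk := harity k R.1
      exact (w ⟨0, hk⟩).2.elim)
    exact ⟨h⟩
end
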